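/- (Unitarity of the Griffiths–Racah functions.) Under the stated hypotheses, define for integers n₁, n₂, m₁, m₂ ≥ 0 with n₁+n₂ ≤ N and m₁+m₂ ≤ N: 𝒢_{n₁,n₂}(m₁,m₂) := Σ_{a=0}^{min(N−n₂, N−m₂)} (−1)^{a+m₂} · 𝒫_{n₁}(a; −2j⁽²⁾−1, −2j⁽¹⁾−1, n₂−N−1, N−n₂−2j⁽²⁾+2j⁽³⁾+1) · 𝒫_{n₂}(m₂; −2j⁽⁰⁾−1, −2j⁽⁴⁾−1, a−N−1, N−a−2j⁽⁰⁾−2j⁽¹⁾−1) · 𝒫_{m₁}(a; −2j⁽²⁾−1, −2j⁽⁴⁾−1, m₂−N−1, N−m₂−2j⁽²⁾+2j⁽³⁾+1). Then for all admissible (n₁,n₂), (n₁',n₂'): Σ_{m₁,m₂ ≥ 0, m₁+m₂ ≤ N} 𝒢_{n₁,n₂}(m₁,m₂)·𝒢_{n₁',n₂'}(m₁,m₂) = δ_{n₁,n₁'}·δ_{n₂,n₂'}; and for all admissible (m₁,m₂), (m₁',m₂'): Σ_{n₁,n₂ ≥ 0, n₁+n₂ ≤ N} 𝒢_{n₁,n₂}(m₁,m₂)·𝒢_{n₁,n₂}(m₁',m₂')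 = δ_{m₁,m₁'}·δ_{m₂,m₂'}. -/

import Mathlib

noncomputable section

open Finset Real

/-- Pochhammer symbol `(y)_k = y(y+1)⋯(y+k−1)` for real `y`. -/
def poch (y : ℝ) (k : ℕ) : ℝ := ∏ i ∈ Finset.range k, (y + i)

/-- The terminating Racah function `r_n(m; α, β, −𝒩−1, δ)` on the grid `{0,…,𝒩}`:
`r_n(m) = ∑_{k=0}^{n} (−n)_k (n+α+β+1)_k (−m)_k (m−𝒩+δ)_k /
  ((α+1)_k (β+δ+1)_k (−𝒩)_k k!)`. -/
def racah (𝒩 : ℕ) (α β δ : ℝ) (n m : ℕ) : ℝ :=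
  ∑ k ∈ Finset.range (n + 1),
    (poch (-(n : ℝ)) k * poch ((n : ℝ) + α + β + 1) k * poch (-(m : ℝ)) k *
        poch ((m : ℝ) - (𝒩 : ℝ) + δ) k) /
      (poch (α + 1) k * poch (β + δ + 1) k * poch (-(𝒩 : ℝ)) k * (Nat.factorial k : ℝ))

/-- Coefficient `A_n` of the Racah recurrence relation. -/
def coeffA (𝒩 : ℕ) (α β δ : ℝ) (n : ℕ) : ℝ :=
  ((n : ℝ) + α + 1) * ((n : ℝ) + β + δ + 1) * ((n : ℝ) - (𝒩 : ℝ)) * ((n : ℝ) + α + β + 1) /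
    ((2 * (n : ℝ) + α + β + 1) * (2 * (n : ℝ) + α + β + 2))

/-- Coefficient `C_n` of the Racah recurrence relation. -/
def coeffC (𝒩 : ℕ) (α β δ : ℝ) (n : ℕ) : ℝ :=
  (n : ℝ) * ((n : ℝ) + α + β + (𝒩 : ℝ) + 1) * ((n : ℝ) + α - δ) * ((n : ℝ) + β) /
    ((2 * (n : ℝ) + α + β) * (2 * (n : ℝ) + α + β + 1))

/-- Coefficient `B_m` of the Racah difference relation. -/
def coeffB (𝒩 : ℕ) (α β δ : ℝ) (m : ℕ) : ℝ :=
  ((m : ℝ) + α + 1) * ((m : ℝ) + β + δ + 1) * ((m : ℝ) - (𝒩 : ℝ)) * ((m : ℝ) - (𝒩 : ℝ) + δ) /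
    ((2 * (m : ℝ) - (𝒩 : ℝ) + δ) * (2 * (m : ℝ) - (𝒩 : ℝ) + δ + 1))

/-- Coefficient `D_m` of the Racah difference relation. -/
def coeffD (𝒩 : ℕ) (α β δ : ℝ) (m : ℕ) : ℝ :=
  (m : ℝ) * ((m : ℝ) - (𝒩 : ℝ) - 1 - α + δ) * ((m : ℝ) - (𝒩 : ℝ) - 1 - β) * ((m : ℝ) + δ) /
    ((2 * (m : ℝ) - (𝒩 : ℝ) - 1 + δ) * (2 * (m : ℝ) - (𝒩 : ℝ) + δ))

/-- Normalization constant `κ = (α−δ+1)_𝒩 (β+1)_𝒩 / ((α+β+2)_𝒩 (−δ)_𝒩)`. -/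
def kappa (𝒩 : ℕ) (α β δ : ℝ) : ℝ :=
  poch (α - δ + 1) 𝒩 * poch (β + 1) 𝒩 / (poch (α + β + 2) 𝒩 * poch (-δ) 𝒩)

/-- The orthonormalized Racah function `𝒫_n(m; α, β, −𝒩−1, δ)`. -/
def Pfun (𝒩 : ℕ) (α β δ : ℝ) (n m : ℕ) : ℝ :=
  Real.sqrt (kappa 𝒩 α β δ) *
    (∏ i ∈ Finset.range n,
      coeffA 𝒩 α β δ i / Real.sqrt (coeffA 𝒩 α β δ i * coeffC 𝒩 α β δ (i + 1))) *
    (∏ j ∈ Finset.range m,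
      coeffB 𝒩 α β δ j / Real.sqrt (coeffB 𝒩 α β δ j * coeffD 𝒩 α β δ (j + 1))) *
    racah 𝒩 α β δ n m

/-- The positivity conditions making `𝒫_·(·; α, β, −𝒩−1, δ)` well defined. -/
def PosCond (𝒩 : ℕ) (α β δ : ℝ) : Prop :=
  (∀ i < 𝒩, 0 < coeffA 𝒩 α β δ i * coeffC 𝒩 α β δ (i + 1)) ∧
  (∀ j < 𝒩, 0 < coeffB 𝒩 α β δ j * coeffD 𝒩 α β δ (j + 1)) ∧
  0 < kappa 𝒩 α β δ

/-- The bivariate Griffiths–Racah function `𝒢_{n₁,n₂}(m₁,m₂)`. -/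
def Griffiths (j0 j1 j2 j3 j4 : ℝ) (N : ℕ) (n1 n2 m1 m2 : ℕ) : ℝ :=
  ∑ a ∈ Finset.range (min (N - n2) (N - m2) + 1),
    (-1 : ℝ) ^ (a + m2) *
      Pfun (N - n2) (-2*j2 - 1) (-2*j1 - 1) ((N : ℝ) - n2 - 2*j2 + 2*j3 + 1) n1 a *
      Pfun (N - a) (-2*j0 - 1) (-2*j4 - 1) ((N : ℝ) - a - 2*j0 - 2*j1 - 1) n2 m2 *
      Pfun (N - m2) (-2*j2 - 1) (-2*j4 - 1) ((N : ℝ) - m2 - 2*j2 + 2*j3 + 1) m1 a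

lemma alg1 (A1 A2 A3 A4 d d1 P Q k x : ℝ) (h : A4 * P = -(k+1) * d1 * x * Q) (hd : d ≠ 0) (hd1 : d1 ≠ 0) :
    A1 * A2 * A3 * A4 / (d * d1) * P = -(k+1) * A1 * A2 * A3 * x / d * Q := by
  field_simp
  linear_combination A1*A2*A3*h

lemma alg2 (A1 A2 A3 A4 d d1 P Q k x : ℝ) (h : A4 * P = (k+1) * d1 * x * Q) (hd : d ≠ 0) (hd1 : d1 ≠ 0) :
    A4 * A1 * A2 * A3 / (d1 * d) * P = (k+1) * A1 * A2 * A3 * x / d * Q := by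
  field_simp
  linear_combination A1*A2*A3*h

lemma alg3 (n k α β δ M Q : ℝ) (hd : 2*n+α+β+1 ≠ 0) :
  -(k+1) * (n+α+1)*(n+β+δ+1)*(n-M)*(n+α+β+1+k)/(2*n+α+β+1) * Q
  + (k+1) * (n+α+β+M+1)*(n+α-δ)*(n+β)*(n-k)/(2*n+α+β+1) * Q
   = (k+1) * (k + 1 + δ - M) * ((-n+k) * (n+(α+β+1)+k) * Q)
      - (α+1+k)*(β+δ+1+k)*(-M+k)*(k+1) * Q := by
  rw [div_mul_eq_mul_div, div_mul_eq_mul_div, ← add_div, div_eq_iff hd]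
  ring

lemma alg4 (n N a b c : ℝ)
   (h2 : a+2*n ≠ 0) (h3: a+N+1+n ≠ 0) (h4 : 1+a-b+n ≠ 0) (h5 : 1+a-c+n≠0)
   (h6 : n+1≠0) (h7 : n - N ≠ 0) (h8 : 1+a-b-c+N≠0) (h9 : a+2*n+2 ≠ 0):
  (n+a)*(b+n)*(c+n)/((a+2*n)*(a+N+1+n)*(1+a-b-c+N)) =
          - (((n+a) * (a+2*n+2) * (b+n) * (c+n) * (n-N)) /
    ((a+2*n) * ((n+1) * (a+N+1+n) * (1+a-b+n) * (1+a-c+n)))) * ((n+1)*(1+a-b+n)*(1+a-c+n)/((a+2*n+2)*(N-n)*(1+a-b-c+N))) := by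
  rw [show N - n = -(n-N) by ring]
  generalize a+2*n = e2 at *
  generalize a+N+1+n = e3 at *
  generalize 1+a-b+n = e4 at *
  generalize 1+a-c+n = e5 at *
  generalize n+1 = e6 at *
  generalize n-N = e7 at *
  generalize 1+a-b-c+N = e8 at *
  generalize e2+2 = e9 at *
  field_simp

lemma alg5 (n N a b c : ℝ) (h1 : 1 + a + N ≠ 0) (h2 : a+2*(n+1) ≠ 0) (h3 : 1+a+N+(n+1)≠0)
    (h7 : N-n≠0) (h8 : 1+a-b-c+N≠0) :
    ((1+a-b+N)*(1+a-c+N)/((1+a+N)*(1+a-b-c+N))) *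
            (((N+1)*(1+a+N)) / ((N-n)*(1+a+N+(n+1)))) - 1
            = ((n+1+a)*(b+(n+1))*(c+(n+1))/((a+2*(n+1))*(1+a+N+(n+1))*(1+a-b-c+N)))
              + ((n+1)*(1+a-b+n)*(1+a-c+n)/((a+2*(n+1))*(N-n)*(1+a-b-c+N))) := by
  have key : (a+2*(n+1)) * ((1+a-b+N)*(1+a-c+N)*(N+1) - (1+a-b-c+N)*((N-n)*(1+a+N+(n+1))))
      = (n+1+a)*(b+(n+1))*(c+(n+1))*(N-n) + (n+1)*(1+a-b+n)*(1+a-c+n)*(1+a+N+(n+1)) := by ring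
  generalize (n+1+a)*(b+(n+1))*(c+(n+1)) = p at *
  generalize (n+1)*(1+a-b+n)*(1+a-c+n) = q at *
  generalize (1+a-b+N)*(1+a-c+N) = r at *
  generalize 1+a+N+(n+1) = u at *
  generalize N - n = v at *
  generalize 1+a-b-c+N = w at *
  generalize 1+a+N = x at *
  generalize a+2*(n+1) = y at *
  generalize N+1 = z at *
  field_simp
  linear_combination key

lemma alg6 (A1 A2 A3 A4 C1 C2 C3 C4 d e f : ℝ) (he : e ≠ 0) :
   A1*A2*A3*A4/(d*e) / (C1*C2*C3*C4/(e*f)) = A4*f*A1*A2*A3/(d*(C1*C2*C4*C3)) := by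
  rw [div_div_div_eq, show A1*A2*A3*A4*(e*f) = (A4*f*A1*A2*A3)*e by ring,
   show d*e*(C1*C2*C3*C4) = (d*(C1*C2*C4*C3))*e by ring, mul_div_mul_right _ _ he]

lemma alg7 (n N a b c : ℝ) (y2 : a+N+1+n≠0) (y3 : a+(N+1)+1+n ≠ 0) :
    (((n+a) * (a+2*n+2) * (b+n) * (c+n) * (n-(N+1))) /
    ((a+2*n) * ((n+1) * (a+(N+1)+1+n) * (1+a-b+n) * (1+a-c+n)))) * ((N+1-(n+1))*(a+N+1+(n+1))) =
    (((n+a) * (a+2*n+2) * (b+n) * (c+n) * (n-N)) /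
    ((a+2*n) * ((n+1) * (a+N+1+n) * (1+a-b+n) * (1+a-c+n)))) * ((N+1-n)*(a+N+1+n)) := by
  rw [show a+N+1+(n+1) = a+(N+1)+1+n by ring, show n - (N+1) = -(N+1-n) by ring,
    show N+1-(n+1) = -(n-N) by ring]
  generalize (n+a) * (a+2*n+2) * (b+n) * (c+n) = p at *
  generalize a+2*n = e2 at *
  generalize a+N+1+n = e3 at *
  generalize a+(N+1)+1+n = e1 at *
  generalize 1+a-b+n = e4 at *
  generalize 1+a-c+n = e5 at *
  generalize n+1 = e6 at *
  generalize N+1-n = e7 at *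
  generalize n-N = e8 at *
  have : ∀ x e : ℝ, e2 * (e6 * e * e4 * e5) = e2*e6*e4*e5*e := by intros; ring
  rw [this 0, this 0]
  generalize e2*e6*e4*e5 = f
  rw [div_mul_eq_mul_div, div_mul_eq_mul_div, ← mul_assoc, ← mul_assoc, mul_div_mul_right _ _ y3,
    mul_div_mul_right _ _ y2]
  ring

lemma alg8 (N a b c k w : ℝ) (X1 : 1+a-b+N≠0) (X2 : 1+a-c+N≠0) (X3 : 1+a-b-c+N≠0) (X4 : 1+a+N≠0)
 (y1 : a+2*N≠0) (y2 : a+N+1+N≠0) (y3 : a+(N+1)+1+N ≠ 0) (y6 : N+1≠0) :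
  k * ((1+a-b+N)*(1+a-c+N)/((1+a+N)*(1+a-b-c+N))) * (w * ((N+1)*(1+a+N)) / (a+N+1+N) * (((N+a) * (a+2*N+2) * (b+N) * (c+N) * (N-(N+1))) /
    ((a+2*N) * ((N+1) * (a+(N+1)+1+N) * (1+a-b+N) * (1+a-c+N))))) =
   - (k * w * ((N+a)*(b+N)*(c+N)/((a+2*N)*(a+N+1+N)*(1+a-b-c+N)))) := by
  rw [show N - (N+1) = -1 by ring, show a + (N+1)+1+N = a+2*N+2 by ring] at *
  generalize a+2*N = e2 at *
  generalize a+N+1+N = e3 at *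
  generalize 1+a-b+N = e4 at *
  generalize 1+a-c+N = e5 at *
  generalize N+1 = e6 at *
  generalize 1+a+N = e7 at *
  generalize 1+a-b-c+N = e8 at *
  generalize e2+2 = e9 at *
  field_simp
lemma poch_succ (y : ℝ) (k : ℕ) : poch y (k+1) = poch y k * (y + k) := by
  simp [poch, Finset.prod_range_succ]

lemma poch_zero (y : ℝ) : poch y 0 = 1 := by simp [poch]

lemma poch_succ' (y : ℝ) (k : ℕ) : poch y (k+1) = y * poch (y+1) k := by
  simp only [poch, Finset.prod_range_succ']
  rw [mul_comm]
  congr 1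
  · simp
  · apply Finset.prod_congr rfl
    intro i _
    push_cast; ring

lemma poch_neg_eq_zero (n k : ℕ) (h : n < k) : poch (-(n : ℝ)) k = 0 := by
  unfold poch
  apply Finset.prod_eq_zero (Finset.mem_range.2 h)
  ring

lemma poch_ne_zero (y : ℝ) (k : ℕ) (h : ∀ i < k, y + i ≠ 0) : poch y k ≠ 0 := by
  unfold poch
  apply Finset.prod_ne_zero_iff.2
  intro i hi
  exact h i (Finset.mem_range.1 hi)

lemma poch_ne_zero' (y : ℝ) (k : ℕ) (h : poch y k ≠ 0) : ∀ i < k, y + i ≠ 0 := by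
  unfold poch at h
  intro i hi
  exact Finset.prod_ne_zero_iff.1 h i (Finset.mem_range.2 hi)

/-- Extended sum for the Racah function. -/
lemma racah_ext (𝒩 : ℕ) (α β δ : ℝ) (n m : ℕ) (hn : n ≤ 𝒩) :
    racah 𝒩 α β δ n m = ∑ k ∈ Finset.range (𝒩 + 1),
    (poch (-(n : ℝ)) k * poch ((n : ℝ) + α + β + 1) k * poch (-(m : ℝ)) k *
        poch ((m : ℝ) - (𝒩 : ℝ) + δ) k) /
      (poch (α + 1) k * poch (β + δ + 1) k * poch (-(𝒩 : ℝ)) k * (Nat.factorial k : ℝ)) := by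
  unfold racah
  apply Finset.sum_subset
  · intro k hk
    simp only [Finset.mem_range] at *
    omega
  · intro k _ hk
    simp only [Finset.mem_range, not_lt] at hk
    rw [poch_neg_eq_zero n k (by omega)]
    simp

lemma racah_dual (𝒩 : ℕ) (α β δ : ℝ) (n m : ℕ) (hn : n ≤ 𝒩) (hm : m ≤ 𝒩) :
    racah 𝒩 α β δ n m = racah 𝒩 α (δ - 𝒩 - 1 - α) (𝒩 + α + β + 1) m n := by
  rw [racah_ext _ _ _ _ _ _ hn, racah_ext _ _ _ _ _ _ hm]
  apply Finset.sum_congr rfl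
  intro k _
  have e1 : (m : ℝ) + α + (δ - 𝒩 - 1 - α) + 1 = m - 𝒩 + δ := by ring
  have e2 : (n : ℝ) - 𝒩 + (𝒩 + α + β + 1) = n + α + β + 1 := by ring
  have e3 : (δ - 𝒩 - 1 - α) + (𝒩 + α + β + 1) + 1 = β + δ + 1 := by ring
  rw [e1, e2, e3]
  ring

lemma coeffB_dual (𝒩 : ℕ) (α β δ : ℝ) (m : ℕ) :
    coeffB 𝒩 α β δ m = coeffA 𝒩 α (δ - 𝒩 - 1 - α) (𝒩 + α + β + 1) m := by
  unfold coeffA coeffB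
  congr 1 <;> ring

lemma coeffD_dual (𝒩 : ℕ) (α β δ : ℝ) (m : ℕ) :
    coeffD 𝒩 α β δ m = coeffC 𝒩 α (δ - 𝒩 - 1 - α) (𝒩 + α + β + 1) m := by
  unfold coeffC coeffD
  congr 1 <;> ring

lemma coeffA_dual (𝒩 : ℕ) (α β δ : ℝ) (m : ℕ) :
    coeffA 𝒩 α β δ m = coeffB 𝒩 α (δ - 𝒩 - 1 - α) (𝒩 + α + β + 1) m := by
  unfold coeffA coeffB
  congr 1 <;> ring

lemma coeffC_dual (𝒩 : ℕ) (α β δ : ℝ) (m : ℕ) :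
    coeffC 𝒩 α β δ m = coeffD 𝒩 α (δ - 𝒩 - 1 - α) (𝒩 + α + β + 1) m := by
  unfold coeffC coeffD
  congr 1 <;> ring

/-- Nonvanishing of the denominators `α+β+1+k`. -/
lemma den_ne (𝒩 : ℕ) (α β δ : ℝ) (hN : 0 < 𝒩)
    (hA : ∀ i < 𝒩, coeffA 𝒩 α β δ i ≠ 0) (hC : ∀ i < 𝒩, coeffC 𝒩 α β δ (i+1) ≠ 0)
    (k : ℕ) (hk : k ≤ 2 * 𝒩) : (k : ℝ) + α + β + 1 ≠ 0 := by
  rcases Nat.even_or_odd' k with ⟨c, hc | hc⟩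
  · by_cases hc0 : c < 𝒩
    · have h := hA c hc0
      unfold coeffA at h
      intro h0
      apply h
      have : (2 * (c:ℝ) + α + β + 1) = 0 := by rw [← h0, hc]; push_cast; ring
      rw [this]; simp
    · have h := hC (c-1) (by omega)
      have hc1 : c - 1 + 1 = c := by omega
      rw [hc1] at h
      unfold coeffC at h
      intro h0
      apply h
      have : (2 * (c:ℝ) + α + β + 1) = 0 := by rw [← h0, hc]; push_cast; ring
      rw [this]; simp
  · have h := hA c (by omega)
    unfold coeffA at h
    intro h0
    apply h
    have : (2 * (c:ℝ) + α + β + 2) = 0 := by rw [← h0, hc]; push_cast; ring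
    rw [this]; simp

lemma den_ne' (𝒩 : ℕ) (α β δ : ℝ) (hN : 0 < 𝒩)
    (hB : ∀ i < 𝒩, coeffB 𝒩 α β δ i ≠ 0) (hD : ∀ i < 𝒩, coeffD 𝒩 α β δ (i+1) ≠ 0)
    (k : ℕ) (hk : k ≤ 2 * 𝒩) : (k : ℝ) - 𝒩 + δ ≠ 0 := by
  have := den_ne 𝒩 α (δ - 𝒩 - 1 - α) (𝒩 + α + β + 1) hN
    (fun i hi => by rw [← coeffB_dual]; exact hB i hi)
    (fun i hi => by rw [← coeffD_dual]; exact hD i hi) k hk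
  intro h; apply this; rw [← h]; ring

/-- `(-x)_k (x+a)_k`. -/
def pp (a x : ℝ) (k : ℕ) : ℝ := poch (-x) k * poch (x + a) k

lemma pp_up (a x : ℝ) (k : ℕ) :
    (x + a) * (pp a (x+1) (k+1) - pp a x (k+1)) =
      -(k+1) * (2*x+a+1) * (x + a + k) * pp a x k := by
  have h1 : poch (-(x+1)) (k+1) = -(x+1) * poch (-x) k := by
    rw [poch_succ']; congr 2; ring
  have h2 : (x+a) * poch (x+1+a) k = poch (x+a) k * (x + a + k) := by
    have := poch_succ' (x+a) k
    rw [poch_succ] at this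
    rw [this]; congr 2; ring
  unfold pp
  rw [h1, poch_succ (-x), poch_succ (x+1+a), poch_succ (x+a)]
  linear_combination (-(x+1) * poch (-x) k * (x+1+a+k)) * h2

lemma pp_down (a x : ℝ) (k : ℕ) :
    x * (pp a (x-1) (k+1) - pp a x (k+1)) =
      (k+1) * (2*x+a-1) * (x - k) * pp a x k := by
  have h1 : poch (x-1+a) (k+1) = (x-1+a) * poch (x+a) k := by
    rw [poch_succ']; congr 2; ring
  have h2 : -x * poch (-(x-1)) k = poch (-x) k * (-x + k) := by
    have := poch_succ' (-x) k
    rw [poch_succ] at this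
    rw [this]; congr 2; ring
  unfold pp
  rw [h1, poch_succ (-x), poch_succ (-(x-1)), poch_succ (x+a)]
  linear_combination (-(x-1+a) * poch (x+a) k * (-(x-1)+k)) * h2

/-- Coefficientwise form of the recurrence. -/
lemma pp_rec (𝒩 : ℕ) (α β δ : ℝ) (hN : 0 < 𝒩)
    (hA : ∀ i < 𝒩, coeffA 𝒩 α β δ i ≠ 0) (hC : ∀ i < 𝒩, coeffC 𝒩 α β δ (i+1) ≠ 0)
    (n : ℕ) (hn : n ≤ 𝒩) (k : ℕ) :
    coeffA 𝒩 α β δ n * (pp (α+β+1) (n+1) (k+1) - pp (α+β+1) n (k+1))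
      + coeffC 𝒩 α β δ n * (pp (α+β+1) (n-1) (k+1) - pp (α+β+1) n (k+1))
    = (k+1) * (k + 1 + δ - 𝒩) * pp (α+β+1) n (k+1)
      - (α+1+k)*(β+δ+1+k)*(-𝒩+k)*(k+1) * pp (α+β+1) n k := by
  have d0 : 2*(n:ℝ) + α+β+1 ≠ 0 := by
    have := den_ne 𝒩 α β δ hN hA hC (2*n) (by omega)
    push_cast at this; exact this
  have eA : coeffA 𝒩 α β δ n * (pp (α+β+1) (n+1) (k+1) - pp (α+β+1) n (k+1))
      = -(k+1) * (n+α+1)*(n+β+δ+1)*(n-𝒩)*(n+α+β+1+k)/(2*n+α+β+1) * pp (α+β+1) n k := by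
    rcases hn.lt_or_eq with h | h
    · have d1 : 2*(n:ℝ) + α+β+2 ≠ 0 := by
        have := den_ne 𝒩 α β δ hN hA hC (2*n+1) (by omega)
        push_cast at this
        intro h0; apply this; rw [← h0]; ring
      unfold coeffA
      have := pp_up (α+β+1) n k
      rw [show 2*(n:ℝ) + (α+β+1) + 1 = 2*n+α+β+2 by ring,
        show (n:ℝ) + (α+β+1) = n+α+β+1 by ring] at this
      exact alg1 _ _ _ _ _ _ _ _ _ _ this d0 d1
    · unfold coeffA
      rw [h]; simp
  have eC : coeffC 𝒩 α β δ n * (pp (α+β+1) (n-1) (k+1) - pp (α+β+1) n (k+1))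
      = (k+1) * (n+α+β+𝒩+1)*(n+α-δ)*(n+β)*(n-k)/(2*n+α+β+1) * pp (α+β+1) n k := by
    rcases Nat.eq_zero_or_pos n with h | h
    · subst h
      unfold coeffC
      rcases Nat.eq_zero_or_pos k with h | h
      · subst h; simp
      · have : pp (α+β+1) ((0:ℕ):ℝ) k = 0 := by
          unfold pp; rw [poch_neg_eq_zero 0 k h, zero_mul]
        rw [this]; simp
    · have d1 : 2*(n:ℝ) + α+β ≠ 0 := by
        have := den_ne 𝒩 α β δ hN hA hC (2*n-1) (by omega)
        rw [Nat.cast_sub (by omega)] at this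
        push_cast at this
        intro h0; apply this; rw [← h0]; ring
      unfold coeffC
      have := pp_down (α+β+1) n k
      rw [show 2*(n:ℝ) + (α+β+1) - 1 = 2*n+α+β by ring] at this
      exact alg2 _ _ _ _ _ _ _ _ _ _ this d0 d1
  have e0 : pp (α+β+1) n (k+1) = (-n+k) * (n+(α+β+1)+k) * pp (α+β+1) n k := by
    unfold pp; rw [poch_succ, poch_succ]; ring
  rw [eA, eC, e0]
  exact alg3 _ _ _ _ _ _ _ d0

lemma racah_rec (𝒩 : ℕ) (α β δ : ℝ) (hN : 0 < 𝒩)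
    (hA : ∀ i < 𝒩, coeffA 𝒩 α β δ i ≠ 0) (hC : ∀ i < 𝒩, coeffC 𝒩 α β δ (i+1) ≠ 0)
    (n m : ℕ) (hn : n ≤ 𝒩) (hm : m ≤ 𝒩) :
    ((m:ℝ) * (m - 𝒩 + δ)) * racah 𝒩 α β δ n m =
      coeffA 𝒩 α β δ n * (racah 𝒩 α β δ (n+1) m - racah 𝒩 α β δ n m)
      + coeffC 𝒩 α β δ n * (racah 𝒩 α β δ (n-1) m - racah 𝒩 α β δ n m) := by
  set a := α + β + 1 with ha
  set φ : ℕ → ℝ := fun k => poch (-(m:ℝ)) k * poch ((m:ℝ)-𝒩+δ) k with hφ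
  set dn : ℕ → ℝ := fun k =>
    poch (α + 1) k * poch (β + δ + 1) k * poch (-(𝒩 : ℝ)) k * (Nat.factorial k : ℝ) with hdn
  set S : ℝ → ℝ := fun x => ∑ k ∈ Finset.range (𝒩+1), pp a x k * φ k / dn k with hS
  have hr : ∀ n : ℕ, n ≤ 𝒩 → racah 𝒩 α β δ n m = S n := by
    intro n hn
    rw [racah_ext _ _ _ _ _ _ hn]
    apply Finset.sum_congr rfl
    intro k _
    simp only [pp, hφ, hdn, ha]
    rw [show (n:ℝ) + α + β + 1 = n + (α+β+1) by ring]
    ring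
  have hdn0 : ∀ k ≤ 𝒩, dn k ≠ 0 := by
    intro k hk
    have hx : ∀ i < 𝒩, (i:ℝ) + α + 1 ≠ 0 ∧ (i:ℝ) + β + δ + 1 ≠ 0 := by
      intro i hi
      have := hA i hi
      unfold coeffA at this
      constructor <;> · intro h0; apply this; rw [h0]; simp
    simp only [hdn]
    refine mul_ne_zero (mul_ne_zero (mul_ne_zero ?_ ?_) ?_) (by positivity)
    · apply poch_ne_zero; intro i hi h0
      exact (hx i (by omega)).1 (by rw [← h0]; ring)
    · apply poch_ne_zero; intro i hi h0
      exact (hx i (by omega)).2 (by rw [← h0]; ring)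
    · apply poch_ne_zero; intro i hi h0
      have : (i:ℝ) = 𝒩 := by linarith
      have : i = 𝒩 := by exact_mod_cast this
      omega
  have e1 : coeffA 𝒩 α β δ n * (racah 𝒩 α β δ (n+1) m - racah 𝒩 α β δ n m)
      = coeffA 𝒩 α β δ n * (S (n+1) - S n) := by
    rcases hn.lt_or_eq with h | h
    · rw [hr n hn, hr (n+1) h]; push_cast; rfl
    · have : coeffA 𝒩 α β δ n = 0 := by unfold coeffA; rw [h]; simp
      rw [this]; ring
  have e2 : coeffC 𝒩 α β δ n * (racah 𝒩 α β δ (n-1) m - racah 𝒩 α β δ n m)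
      = coeffC 𝒩 α β δ n * (S (n-1) - S n) := by
    rcases Nat.eq_zero_or_pos n with h | h
    · have : coeffC 𝒩 α β δ n = 0 := by unfold coeffC; rw [h]; simp
      rw [this]; ring
    · rw [hr n hn, hr (n-1) (by omega), Nat.cast_sub (by omega)]; push_cast; rfl
  rw [e1, e2, hr n hn]
  have hφs : ∀ k, φ (k+1) = (k * (k + δ - 𝒩) - m * (m-𝒩+δ)) * φ k := by
    intro k; simp only [hφ, poch_succ]; ring
  have hφ0 : φ (𝒩+1) = 0 := by
    simp only [hφ]; rw [poch_neg_eq_zero m (𝒩+1) (by omega)]; simp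
  have hdns : ∀ k, dn (k+1) = dn k * ((α+1+k)*(β+δ+1+k)*(-𝒩+k)*(k+1)) := by
    intro k; simp only [hdn, poch_succ, Nat.factorial_succ]; push_cast; ring
  have key : ∀ K ≤ 𝒩, (m * (m-𝒩+δ)) * ∑ k ∈ Finset.range (K+1), pp a n k * φ k / dn k
      = coeffA 𝒩 α β δ n * (∑ k ∈ Finset.range (K+1), pp a (n+1) k * φ k / dn k
          - ∑ k ∈ Finset.range (K+1), pp a n k * φ k / dn k)
        + coeffC 𝒩 α β δ n * (∑ k ∈ Finset.range (K+1), pp a (n-1) k * φ k / dn k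
          - ∑ k ∈ Finset.range (K+1), pp a n k * φ k / dn k)
        - pp a n K * φ (K+1) / dn K := by
    intro K
    induction K with
    | zero =>
      intro _
      rw [hφs]
      simp [pp, poch_zero]
      simp [hφ, hdn, poch_zero]
    | succ K ih =>
      intro hK
      have ih := ih (by omega)
      simp only [Finset.sum_range_succ _ (K+1)]
      have h1 := pp_rec 𝒩 α β δ hN hA hC n hn K
      rw [← ha] at h1
      have hd0 := hdn0 K (by omega)
      have hd1 := hdn0 (K+1) hK
      have hq : pp a n K * φ (K+1) / dn K
        = (α+1+K)*(β+δ+1+K)*(-𝒩+K)*(K+1) * pp a n K * φ (K+1) / dn (K+1) := by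
        rw [hdns K] at hd1 ⊢
        have := right_ne_zero_of_mul hd1
        rw [div_eq_div_iff hd0 hd1]
        ring
      rw [hφs (K+1)]
      rw [hq] at ih
      push_cast
      linear_combination ih - (φ (K+1) / dn (K+1)) * h1
  have := key 𝒩 le_rfl
  rw [hφ0] at this
  simp only [hS]
  rw [this]; simp

lemma jacobi_orth (𝒩 : ℕ) (A C R R' : ℕ → ℝ) (L L' : ℝ) (hC0 : C 0 = 0) (hAN : A 𝒩 = 0)
    (hC : ∀ i < 𝒩, C (i+1) ≠ 0)
    (h : ∀ n ≤ 𝒩, L * R n = A n * (R (n+1) - R n) + C n * (R (n-1) - R n))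
    (h' : ∀ n ≤ 𝒩, L' * R' n = A n * (R' (n+1) - R' n) + C n * (R' (n-1) - R' n)) :
    (L - L') * ∑ n ∈ Finset.range (𝒩+1), (∏ i ∈ Finset.range n, A i / C (i+1)) * (R n * R' n)
      = 0 := by
  have key : ∀ K ≤ 𝒩, (L - L') *
      ∑ n ∈ Finset.range (K+1), (∏ i ∈ Finset.range n, A i / C (i+1)) * (R n * R' n)
      = (∏ i ∈ Finset.range K, A i / C (i+1)) * A K * (R (K+1) * R' K - R K * R' (K+1)) := by
    intro K
    induction K with
    | zero =>
      intro _
      have a1 := h 0 (by omega)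
      have a2 := h' 0 (by omega)
      simp [hC0] at a1 a2 ⊢
      linear_combination R' 0 * a1 - R 0 * a2
    | succ K ih =>
      intro hK
      rw [Finset.sum_range_succ, mul_add, ih (by omega), Finset.prod_range_succ]
      have a1 := h (K+1) hK
      have a2 := h' (K+1) hK
      have c := hC K (by omega)
      simp only [Nat.add_sub_cancel] at a1 a2
      set W := ∏ i ∈ Finset.range K, A i / C (i+1)
      have e : W * (A K / C (K+1)) * C (K+1) = W * A K := by field_simp
      linear_combination (W * (A K / C (K+1))) * (R' (K+1) * a1 - R (K+1) * a2)
        + (R K * R' (K+1) - R (K+1) * R' K) * e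
  rw [key 𝒩 le_rfl, hAN]; ring

lemma racah_orth (𝒩 : ℕ) (α β δ : ℝ) (hN : 0 < 𝒩)
    (hA : ∀ i < 𝒩, coeffA 𝒩 α β δ i ≠ 0) (hC : ∀ i < 𝒩, coeffC 𝒩 α β δ (i+1) ≠ 0)
    (hB : ∀ i < 𝒩, coeffB 𝒩 α β δ i ≠ 0) (hD : ∀ i < 𝒩, coeffD 𝒩 α β δ (i+1) ≠ 0)
    (m m' : ℕ) (hm : m ≤ 𝒩) (hm' : m' ≤ 𝒩) (hne : m ≠ m') :
    ∑ n ∈ Finset.range (𝒩+1), (∏ i ∈ Finset.range n, coeffA 𝒩 α β δ i / coeffC 𝒩 α β δ (i+1)) *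
      (racah 𝒩 α β δ n m * racah 𝒩 α β δ n m') = 0 := by
  have h := jacobi_orth 𝒩 (coeffA 𝒩 α β δ) (coeffC 𝒩 α β δ) (fun n => racah 𝒩 α β δ n m)
    (fun n => racah 𝒩 α β δ n m') ((m:ℝ) * (m - 𝒩 + δ)) ((m':ℝ) * (m' - 𝒩 + δ))
    (by simp [coeffC]) (by simp [coeffA]) hC
    (fun n hn => racah_rec 𝒩 α β δ hN hA hC n m hn hm)
    (fun n hn => racah_rec 𝒩 α β δ hN hA hC n m' hn hm')
  refine (mul_eq_zero.1 h).resolve_left ?_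
  have e : (m:ℝ) * (m - 𝒩 + δ) - (m':ℝ) * (m' - 𝒩 + δ)
    = ((m:ℝ) - m') * (((m+m' : ℕ):ℝ) - 𝒩 + δ) := by push_cast; ring
  rw [e]
  refine mul_ne_zero ?_ (den_ne' 𝒩 α β δ hN hB hD _ (by omega))
  intro h0
  apply hne
  have : (m:ℝ) = m' := by linarith
  exact_mod_cast this

/-- Ratio of consecutive weights. -/
def qq (M a b c : ℝ) (i : ℕ) : ℝ :=
  ((i+a) * (a+2*i+2) * (b+i) * (c+i) * (i-M)) /
    ((a+2*i) * ((i+1) * (a+M+1+i) * (1+a-b+i) * (1+a-c+i)))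

def ww (M a b c : ℝ) (n : ℕ) : ℝ := ∏ i ∈ Finset.range n, qq M a b c i

def kk (a b c : ℝ) (N : ℕ) : ℝ :=
  poch (1+a-b) N * poch (1+a-c) N / (poch (1+a) N * poch (1+a-b-c) N)

/-- Terminating very-well-poised summation (via a WZ certificate). -/
lemma dougall (a b c : ℝ) (𝒩 : ℕ)
    (ha : ∀ i ≤ 2*𝒩, a + (i:ℕ) ≠ 0) (hb : ∀ i < 𝒩, 1+a-b+(i:ℕ) ≠ 0)
    (hc : ∀ i < 𝒩, 1+a-c+(i:ℕ) ≠ 0) (hbc : ∀ i < 𝒩, 1+a-b-c+(i:ℕ) ≠ 0) (N : ℕ) (hN : N ≤ 𝒩) :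
    kk a b c N * ∑ n ∈ Finset.range (N+1), ww N a b c n = 1 := by
  induction N with
  | zero => simp [kk, ww, poch_zero]
  | succ N ih =>
    have ih := ih (by omega)
    rw [← ih]
    have X1 := hb N (by omega)
    have X2 := hc N (by omega)
    have X3 := hbc N (by omega)
    have X4 : 1 + a + N ≠ 0 := by
      have := ha (N+1) (by omega); push_cast at this
      intro h; apply this; rw [← h]; ring
    have hkk : kk a b c (N+1) =
        kk a b c N * ((1+a-b+N)*(1+a-c+N)/((1+a+N)*(1+a-b-c+N))) := by
      unfold kk; simp only [poch_succ]
      rw [div_mul_div_comm]; congr 1 <;> ring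
    have hw : ∀ n ≤ N, ww (N+1) a b c n * ((N+1-n)*(a+N+1+n)) = ww N a b c n * ((N+1)*(a+N+1)) := by
      intro n
      induction n with
      | zero => intro _; simp [ww]
      | succ n ihn =>
        intro hn
        have ihn := ihn (by omega)
        have y1 : a + 2*(n:ℝ) ≠ 0 := by have := ha (2*n) (by omega); push_cast at this; exact this
        have y2 : a + N + 1 + (n:ℝ) ≠ 0 := by
          have := ha (N+1+n) (by omega); push_cast at this
          intro h; apply this; rw [← h]; ring
        have y3 : a + (N+1) + 1 + (n:ℝ) ≠ 0 := by
          have := ha (N+1+1+n) (by omega); push_cast at this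
          intro h; apply this; rw [← h]; ring
        have y4 := hb n (by omega)
        have y5 := hc n (by omega)
        have y6 : (n:ℝ) + 1 ≠ 0 := by positivity
        have y7 : (N:ℝ) + 1 - n ≠ 0 := by
          have : (n:ℝ) + 1 ≤ N := by exact_mod_cast hn
          intro h; linarith
        have hq : qq (N+1) a b c n * ((N+1-(n+1))*(a+N+1+(n+1))) =
            qq N a b c n * ((N+1-n)*(a+N+1+n)) := by
          unfold qq; exact alg7 _ _ _ _ _ y2 y3
        unfold ww at *
        rw [Finset.prod_range_succ, Finset.prod_range_succ]
        push_cast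
        linear_combination (∏ i ∈ Finset.range n, qq (N+1) a b c i) * hq + qq N a b c n * ihn
    have key : ∀ n ≤ N, kk a b c (N+1) * ∑ i ∈ Finset.range (n+1), ww (N+1) a b c i
        - kk a b c N * ∑ i ∈ Finset.range (n+1), ww N a b c i
        = kk a b c N * ww N a b c n * ((n+a)*(b+n)*(c+n)/((a+2*n)*(a+N+1+n)*(1+a-b-c+N))) := by
      intro n hn
      have hw' : ∀ n ≤ N, ww (N+1) a b c n =
          ww N a b c n * ((N+1)*(a+N+1)) / ((N+1-n)*(a+N+1+n)) := by
        intro n hn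
        rw [← hw n hn]
        have y7 : (N:ℝ) + 1 - n ≠ 0 := by
          have : (n:ℝ) ≤ N := by exact_mod_cast hn
          intro h; linarith
        have y2 : a + N + 1 + (n:ℝ) ≠ 0 := by
          have := ha (N+1+n) (by omega); push_cast at this
          intro h; apply this; rw [← h]; ring
        field_simp
      induction n with
      | zero =>
        have y0 : a ≠ 0 := by have := ha 0 (by omega); simpa using this
        have y1 : a + N + 1 ≠ 0 := by intro h; apply X4; rw [← h]; ring
        rw [hkk]
        simp [ww]
        field_simp
        ring
      | succ n ihn =>
        have ihn := ihn (by omega)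
        rw [Finset.sum_range_succ _ (n+1), Finset.sum_range_succ _ (n+1), hw' (n+1) hn]
        rw [hkk] at *
        have hs : ww N a b c (n+1) = ww N a b c n * qq N a b c n := by
          unfold ww; rw [Finset.prod_range_succ]
        have y1 : a + 2*(n:ℝ) ≠ 0 := by have := ha (2*n) (by omega); push_cast at this; exact this
        have y1' : a + 2*((n:ℝ)+1) ≠ 0 := by
          have := ha (2*(n+1)) (by omega); push_cast at this; exact this
        have y2 : a + N + 1 + (n:ℝ) ≠ 0 := by
          have := ha (N+1+n) (by omega); push_cast at this
          intro h; apply this; rw [← h]; ring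
        have y3 : a + N + 1 + ((n:ℝ)+1) ≠ 0 := by
          have := ha (N+1+1+n) (by omega); push_cast at this
          intro h; apply this; rw [← h]; ring
        have y4 := hb n (by omega)
        have y5 := hc n (by omega)
        have y6 : (n:ℝ) + 1 ≠ 0 := by positivity
        have y7 : (N:ℝ) - n ≠ 0 := by
          have : (n:ℝ) + 1 ≤ N := by exact_mod_cast hn
          intro h; linarith
        have y8 : (N:ℝ) + 1 - (n+1) ≠ 0 := by
          intro h; apply y7; rw [← h]; ring
        have hz : (n+a)*(b+n)*(c+n)/((a+2*n)*(a+N+1+n)*(1+a-b-c+N)) =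
          - qq N a b c n * ((n+1)*(1+a-b+n)*(1+a-c+n)/((a+2*(n+1))*(N-n)*(1+a-b-c+N))) := by
          unfold qq
          have y9 : a + 2*(n:ℝ) + 2 ≠ 0 := by intro h; apply y1'; rw [← h]; ring
          have y10 : (n:ℝ) - N ≠ 0 := by intro h; apply y7; linarith
          rw [show a + 2*((n:ℝ)+1) = a + 2*n+2 by ring]
          exact alg4 _ _ _ _ _ y1 y2 y4 y5 y6 y10 X3 y9
        have hz2 : ((1+a-b+N)*(1+a-c+N)/((1+a+N)*(1+a-b-c+N))) *
            (((N+1)*(a+N+1)) / ((N+1-(n+1))*(a+N+1+(n+1)))) - 1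
            = ((n+1+a)*(b+(n+1))*(c+(n+1))/((a+2*(n+1))*(a+N+1+(n+1))*(1+a-b-c+N)))
              + ((n+1)*(1+a-b+n)*(1+a-c+n)/((a+2*(n+1))*(N-n)*(1+a-b-c+N))) := by
          rw [show (N:ℝ)+1-(n+1) = N - n by ring]
          rw [show a+(N:ℝ)+1 = 1+a+N by ring] at *
          exact alg5 _ _ _ _ _ X4 y1' y3 y7 X3
        rw [hz] at ihn
        rw [hs]
        push_cast
        linear_combination ihn + kk a b c N * ww N a b c n * qq N a b c n * hz2
    have h1 := key N le_rfl
    rw [Finset.sum_range_succ _ (N+1)]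
    have hlast : kk a b c (N+1) * ww (N+1) a b c (N+1)
       = - (kk a b c N * ww N a b c N * ((N+a)*(b+N)*(c+N)/((a+2*N)*(a+N+1+N)*(1+a-b-c+N)))) := by
      have hs : ww (N+1) a b c (N+1) = ww (N+1) a b c N * qq (N+1) a b c N := by
        unfold ww; rw [Finset.prod_range_succ]
      have h2 := hw N le_rfl
      have y1 : a + 2*(N:ℝ) ≠ 0 := by have := ha (2*N) (by omega); push_cast at this; exact this
      have y2 : a + N + 1 + (N:ℝ) ≠ 0 := by
        have := ha (N+1+N) (by omega); push_cast at this
        intro h; apply this; rw [← h]; ring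
      have y3 : a + (N+1) + 1 + (N:ℝ) ≠ 0 := by
        have := ha (N+1+1+N) (by omega); push_cast at this
        intro h; apply this; rw [← h]; ring
      have y6 : (N:ℝ) + 1 ≠ 0 := by positivity
      have h3 : ww (N+1) a b c N = ww N a b c N * ((N+1)*(1+a+N)) / (a+N+1+N) := by
        rw [eq_div_iff y2]
        linear_combination h2
      rw [hs, h3, hkk]
      unfold qq
      exact alg8 _ _ _ _ _ _ X1 X2 X3 X4 y1 y2 y3 y6
    push_cast
    linear_combination h1 + hlast

lemma racah_norm_zero (𝒩 : ℕ) (α β δ : ℝ) (h : PosCond 𝒩 α β δ) :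
    kappa 𝒩 α β δ * ∑ n ∈ Finset.range (𝒩+1),
      (∏ i ∈ Finset.range n, coeffA 𝒩 α β δ i / coeffC 𝒩 α β δ (i+1)) = 1 := by
  obtain ⟨hAC, hBD, hk⟩ := h
  rcases Nat.eq_zero_or_pos 𝒩 with h0 | hN
  · subst h0; simp [kappa, poch_zero]
  have hA : ∀ i < 𝒩, coeffA 𝒩 α β δ i ≠ 0 := fun i hi => left_ne_zero_of_mul (hAC i hi).ne'
  have hC : ∀ i < 𝒩, coeffC 𝒩 α β δ (i+1) ≠ 0 := fun i hi => right_ne_zero_of_mul (hAC i hi).ne'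
  have hd := den_ne 𝒩 α β δ hN hA hC
  have hk' := hk.ne'
  unfold kappa at hk'
  have k1 := poch_ne_zero' _ _ (left_ne_zero_of_mul (div_ne_zero_iff.1 hk').1)
  have k2 := poch_ne_zero' _ _ (right_ne_zero_of_mul (div_ne_zero_iff.1 hk').1)
  have k3 := poch_ne_zero' _ _ (right_ne_zero_of_mul (div_ne_zero_iff.1 hk').2)
  have e1 : 1 + (α+β+1) - (α+1) = β + 1 := by ring
  have e2 : 1 + (α+β+1) - (β+δ+1) = α - δ + 1 := by ring
  have e3 : 1 + (α+β+1) - (α+1) - (β+δ+1) = -δ := by ring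
  have e4 : 1 + (α+β+1) = α + β + 2 := by ring
  have D := dougall (α+β+1) (α+1) (β+δ+1) 𝒩
    (fun i hi h => hd i hi (by rw [← h]; ring))
    (by rw [e1]; exact k2) (by rw [e2]; exact k1) (by rw [e3]; exact k3) 𝒩 le_rfl
  have hkk : kappa 𝒩 α β δ = kk (α+β+1) (α+1) (β+δ+1) 𝒩 := by
    unfold kappa kk
    rw [e1, e2, show β + 1 - (β+δ+1) = -δ by ring, e4, mul_comm (poch (β+1) 𝒩)]
  rw [hkk]
  refine Eq.trans ?_ D
  congr 1
  apply Finset.sum_congr rfl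
  intro n hn
  apply Finset.prod_congr rfl
  intro i hi
  simp only [Finset.mem_range] at hn hi
  have y1 := hd (2*i) (by omega)
  have y2 := hd (2*i+1) (by omega)
  have y3 := hd (2*i+2) (by omega)
  push_cast at y1 y2 y3
  unfold coeffA coeffC qq
  push_cast
  rw [e1, e2]
  rw [show 2*((i:ℝ)+1)+α+β = 2*i+1+α+β+1 by ring,
    show 2*(i:ℝ)+α+β+2 = 2*i+1+α+β+1 by ring]
  rw [alg6 _ _ _ _ _ _ _ _ _ _ _ y2]
  congr 1 <;> ring

lemma matrix_orth {n : ℕ} (M : Matrix (Fin (n+1)) (Fin (n+1)) ℝ)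
    (h1 : ∀ i j, i ≠ j → (M * M.transpose) i j = 0)
    (h2 : ∀ i j, i ≠ j → (M.transpose * M) i j = 0)
    (h0 : (M.transpose * M) 0 0 = 1) (hne : ∀ i, M i 0 ≠ 0) :
    M * M.transpose = 1 := by
  ext i j
  by_cases hij : i = j
  · subst hij
    rw [Matrix.one_apply_eq]
    have e := congrFun (congrFun (Matrix.mul_assoc M M.transpose M) i) 0
    rw [Matrix.mul_apply, Matrix.mul_apply] at e
    rw [Finset.sum_eq_single i (fun b _ hb => by rw [h1 i b (Ne.symm hb), zero_mul]) (by simp),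
      Finset.sum_eq_single 0 (fun b _ hb => by rw [h2 b 0 hb, mul_zero]) (by simp), h0] at e
    apply mul_right_cancel₀ (hne i)
    rw [e]; ring
  · rw [h1 i j hij, Matrix.one_apply_ne hij]

lemma prod_sq (A C : ℕ → ℝ) (n : ℕ) (h : ∀ i < n, 0 < A i * C (i+1)) :
    (∏ i ∈ Finset.range n, A i / Real.sqrt (A i * C (i+1)))
      * (∏ i ∈ Finset.range n, A i / Real.sqrt (A i * C (i+1)))
    = ∏ i ∈ Finset.range n, A i / C (i+1) := by
  rw [← Finset.prod_mul_distrib]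
  apply Finset.prod_congr rfl
  intro i hi
  have hp := h i (Finset.mem_range.1 hi)
  rw [div_mul_div_comm, Real.mul_self_sqrt hp.le,
    mul_div_mul_left _ _ (left_ne_zero_of_mul hp.ne')]

lemma racah_zero_right (𝒩 : ℕ) (α β δ : ℝ) (n : ℕ) : racah 𝒩 α β δ n 0 = 1 := by
  unfold racah
  rw [Finset.sum_range_succ', Finset.sum_eq_zero]
  · simp [poch_zero]
  · intro k _
    rw [poch_neg_eq_zero 0 (k+1) (by omega)]; simp

lemma Pfun_orth (𝒩 : ℕ) (α β δ : ℝ) (h : PosCond 𝒩 α β δ) (n n' : ℕ) (hn : n ≤ 𝒩) (hn' : n' ≤ 𝒩) :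
    ∑ m ∈ Finset.range (𝒩+1), Pfun 𝒩 α β δ n m * Pfun 𝒩 α β δ n' m = if n = n' then 1 else 0 := by
  have hnorm := racah_norm_zero 𝒩 α β δ h
  obtain ⟨hAC, hBD, hk⟩ := h
  have hA : ∀ i < 𝒩, coeffA 𝒩 α β δ i ≠ 0 := fun i hi => left_ne_zero_of_mul (hAC i hi).ne'
  have hC : ∀ i < 𝒩, coeffC 𝒩 α β δ (i+1) ≠ 0 := fun i hi => right_ne_zero_of_mul (hAC i hi).ne'
  have hB : ∀ i < 𝒩, coeffB 𝒩 α β δ i ≠ 0 := fun i hi => left_ne_zero_of_mul (hBD i hi).ne'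
  have hD : ∀ i < 𝒩, coeffD 𝒩 α β δ (i+1) ≠ 0 := fun i hi => right_ne_zero_of_mul (hBD i hi).ne'
  have col : ∀ m m', m ≤ 𝒩 → m' ≤ 𝒩 → m ≠ m' →
      ∑ n ∈ Finset.range (𝒩+1), Pfun 𝒩 α β δ n m * Pfun 𝒩 α β δ n m' = 0 := by
    intro m m' hm hm' hne
    have hN : 0 < 𝒩 := by omega
    have := racah_orth 𝒩 α β δ hN hA hC hB hD m m' hm hm' hne
    have e : ∀ n ∈ Finset.range (𝒩+1), Pfun 𝒩 α β δ n m * Pfun 𝒩 α β δ n m' =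
      (Real.sqrt (kappa 𝒩 α β δ) * Real.sqrt (kappa 𝒩 α β δ) *
       (∏ j ∈ Finset.range m,
        coeffB 𝒩 α β δ j / Real.sqrt (coeffB 𝒩 α β δ j * coeffD 𝒩 α β δ (j + 1))) *
       (∏ j ∈ Finset.range m',
        coeffB 𝒩 α β δ j / Real.sqrt (coeffB 𝒩 α β δ j * coeffD 𝒩 α β δ (j + 1)))) *
      ((∏ i ∈ Finset.range n, coeffA 𝒩 α β δ i / coeffC 𝒩 α β δ (i+1)) *
      (racah 𝒩 α β δ n m * racah 𝒩 α β δ n m')) := by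
      intro n hn
      rw [← prod_sq _ _ n (fun i hi => hAC i (by simp only [Finset.mem_range] at hn; omega))]
      unfold Pfun; ring
    rw [Finset.sum_congr rfl e, ← Finset.mul_sum, this, mul_zero]
  have row : ∀ m m', m ≤ 𝒩 → m' ≤ 𝒩 → m ≠ m' →
      ∑ n ∈ Finset.range (𝒩+1), Pfun 𝒩 α β δ m n * Pfun 𝒩 α β δ m' n = 0 := by
    intro m m' hm hm' hne
    have hN : 0 < 𝒩 := by omega
    have := racah_orth 𝒩 α (δ - 𝒩 - 1 - α) (𝒩 + α + β + 1) hN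
      (fun i hi => by rw [← coeffB_dual]; exact hB i hi)
      (fun i hi => by rw [← coeffD_dual]; exact hD i hi)
      (fun i hi => by rw [← coeffA_dual]; exact hA i hi)
      (fun i hi => by rw [← coeffC_dual]; exact hC i hi) m m' hm hm' hne
    have e : ∀ n ∈ Finset.range (𝒩+1), Pfun 𝒩 α β δ m n * Pfun 𝒩 α β δ m' n =
      (Real.sqrt (kappa 𝒩 α β δ) * Real.sqrt (kappa 𝒩 α β δ) *
       (∏ j ∈ Finset.range m,
        coeffA 𝒩 α β δ j / Real.sqrt (coeffA 𝒩 α β δ j * coeffC 𝒩 α β δ (j + 1))) *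
       (∏ j ∈ Finset.range m',
        coeffA 𝒩 α β δ j / Real.sqrt (coeffA 𝒩 α β δ j * coeffC 𝒩 α β δ (j + 1)))) *
      ((∏ i ∈ Finset.range n, coeffA 𝒩 α (δ - 𝒩 - 1 - α) (𝒩 + α + β + 1) i /
          coeffC 𝒩 α (δ - 𝒩 - 1 - α) (𝒩 + α + β + 1) (i+1)) *
      (racah 𝒩 α (δ - 𝒩 - 1 - α) (𝒩 + α + β + 1) n m *
        racah 𝒩 α (δ - 𝒩 - 1 - α) (𝒩 + α + β + 1) n m')) := by
      intro n hn
      have hn : n ≤ 𝒩 := by simp only [Finset.mem_range] at hn; omega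
      simp only [← coeffB_dual, ← coeffD_dual]
      rw [← prod_sq _ _ n (fun i hi => hBD i (by omega)),
        ← racah_dual _ _ _ _ _ _ hm hn, ← racah_dual _ _ _ _ _ _ hm' hn]
      unfold Pfun; ring
    rw [Finset.sum_congr rfl e, ← Finset.mul_sum, this, mul_zero]
  let M : Matrix (Fin (𝒩+1)) (Fin (𝒩+1)) ℝ := fun i j => Pfun 𝒩 α β δ i j
  have hM : M * M.transpose = 1 := by
    apply matrix_orth
    · intro i j hij
      rw [Matrix.mul_apply]
      have := row i j (by omega) (by omega) (fun h => hij (Fin.ext h))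
      rw [Finset.sum_range] at this
      exact this
    · intro i j hij
      rw [Matrix.mul_apply]
      have := col i j (by omega) (by omega) (fun h => hij (Fin.ext h))
      rw [Finset.sum_range] at this
      exact this
    · rw [Matrix.mul_apply, ← hnorm, Finset.sum_range, Finset.mul_sum]
      apply Finset.sum_congr rfl
      intro i _
      rw [← prod_sq _ _ i (fun j hj => hAC j (by omega))]
      change Pfun 𝒩 α β δ i 0 * Pfun 𝒩 α β δ i 0 = _
      unfold Pfun
      rw [racah_zero_right]
      conv_rhs => rw [← Real.mul_self_sqrt hk.le]
      simp
      ring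
    · intro i
      simp only [M, Fin.val_zero]
      unfold Pfun
      rw [racah_zero_right]
      simp only [Finset.range_zero, Finset.prod_empty, mul_one]
      refine mul_ne_zero (Real.sqrt_pos.2 hk).ne' ?_
      apply Finset.prod_ne_zero_iff.2
      intro j hj
      have hj : j < 𝒩 := by simp only [Finset.mem_range] at hj; omega
      exact div_ne_zero (hA j hj) (Real.sqrt_pos.2 (hAC j hj)).ne'
  have e := congrFun (congrFun hM ⟨n, by omega⟩) ⟨n', by omega⟩
  rw [Matrix.mul_apply, Matrix.one_apply] at e
  rw [Finset.sum_range]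
  simp only [Fin.mk.injEq] at e
  exact e

/-- Triangular index set. -/
def tri (N : ℕ) : Finset (ℕ × ℕ) :=
  (Finset.range (N+1) ×ˢ Finset.range (N+1)).filter (fun p => p.1 + p.2 ≤ N)

lemma mem_tri {N : ℕ} {p : ℕ × ℕ} : p ∈ tri N ↔ p.1 + p.2 ≤ N := by
  simp only [tri, Finset.mem_filter, Finset.mem_product, Finset.mem_range]
  omega

lemma range_filter_le (N i : ℕ) (hi : i ≤ N) :
    (Finset.range (N+1)).filter (fun j => i + j ≤ N) = Finset.range (N + 1 - i) := by
  ext j; simp only [Finset.mem_filter, Finset.mem_range]; omega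

lemma sum_tri (N : ℕ) (F : ℕ → ℕ → ℝ) :
    ∑ t : tri N, F t.1.1 t.1.2 =
      ∑ i ∈ Finset.range (N+1), ∑ j ∈ Finset.range (N+1-i), F i j := by
  rw [Finset.sum_coe_sort (tri N) (fun p => F p.1 p.2), tri, Finset.sum_filter,
    Finset.sum_product]
  apply Finset.sum_congr rfl
  intro i hi
  simp only [Finset.mem_range] at hi
  rw [← range_filter_le N i (by omega), Finset.sum_filter]

lemma sum_tri' (N : ℕ) (F : ℕ → ℕ → ℝ) :
    ∑ t : tri N, F t.1.1 t.1.2 =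
      ∑ j ∈ Finset.range (N+1), ∑ i ∈ Finset.range (N+1-j), F i j := by
  rw [Finset.sum_coe_sort (tri N) (fun p => F p.1 p.2), tri, Finset.sum_filter,
    Finset.sum_product_right]
  apply Finset.sum_congr rfl
  intro j hj
  simp only [Finset.mem_range] at hj
  rw [← range_filter_le N j (by omega), Finset.sum_filter]
  apply Finset.sum_congr rfl
  intro i _
  simp only [add_comm]

lemma sum_tri_fst (N i : ℕ) (hi : i ≤ N) (F : ℕ → ℕ → ℝ) :
    ∑ t : tri N, (if i = t.1.1 then F t.1.1 t.1.2 else 0) =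
      ∑ j ∈ Finset.range (N-i+1), F i j := by
  rw [sum_tri N (fun a b => if i = a then F a b else 0), Finset.sum_eq_single i]
  · rw [show N + 1 - i = N - i + 1 by omega]; simp
  · intro b _ hb; simp [hb.symm]
  · intro h; simp only [Finset.mem_range] at h; omega

lemma sum_tri_snd (N j : ℕ) (hj : j ≤ N) (F : ℕ → ℕ → ℝ) :
    ∑ t : tri N, (if j = t.1.2 then F t.1.1 t.1.2 else 0) =
      ∑ i ∈ Finset.range (N-j+1), F i j := by
  rw [sum_tri' N (fun a b => if j = b then F a b else 0), Finset.sum_eq_single j]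
  · rw [show N + 1 - j = N - j + 1 by omega]; simp
  · intro b _ hb; simp [hb.symm]
  · intro h; simp only [Finset.mem_range] at h; omega

/-- Block matrix acting on the first index. -/
def blk1 (N : ℕ) (P : ℕ → ℕ → ℕ → ℝ) : Matrix (tri N) (tri N) ℝ :=
  fun p q => if p.1.2 = q.1.2 then P q.1.2 p.1.1 q.1.1 else 0

/-- Block matrix acting on the second index. -/
def blk2 (N : ℕ) (P : ℕ → ℕ → ℕ → ℝ) : Matrix (tri N) (tri N) ℝ :=
  fun p q => if p.1.1 = q.1.1 then P q.1.1 p.1.2 q.1.2 else 0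

lemma blk1_orth (N : ℕ) (P : ℕ → ℕ → ℕ → ℝ)
    (h : ∀ k ≤ N, ∀ n n', n ≤ N - k → n' ≤ N - k →
      ∑ m ∈ Finset.range (N - k + 1), P k n m * P k n' m = if n = n' then 1 else 0) :
    blk1 N P * (blk1 N P).transpose = 1 := by
  ext p p'
  have hp := mem_tri.1 p.2
  have hp' := mem_tri.1 p'.2
  rw [Matrix.mul_apply, Matrix.one_apply]
  have e : ∀ q : tri N, blk1 N P p q * (blk1 N P).transpose q p' =
      if p.1.2 = q.1.2 then (if p'.1.2 = q.1.2 then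
        P q.1.2 p.1.1 q.1.1 * P q.1.2 p'.1.1 q.1.1 else 0) else 0 := by
    intro q
    simp only [Matrix.transpose_apply, blk1]
    split_ifs <;> simp
  rw [Finset.sum_congr rfl (fun q _ => e q),
    sum_tri_snd N p.1.2 (by omega)
      (fun i j => if p'.1.2 = j then P j p.1.1 i * P j p'.1.1 i else 0)]
  by_cases h2 : p'.1.2 = p.1.2
  · simp only [h2, if_true]
    rw [h _ (by omega) _ _ (by omega) (by omega)]
    congr 1
    rw [Subtype.ext_iff, Prod.ext_iff]
    simp [h2]
  · simp only [h2, if_false, Finset.sum_const_zero]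
    rw [if_neg]
    intro hh; apply h2; rw [hh]

lemma blk2_orth (N : ℕ) (P : ℕ → ℕ → ℕ → ℝ)
    (h : ∀ k ≤ N, ∀ n n', n ≤ N - k → n' ≤ N - k →
      ∑ m ∈ Finset.range (N - k + 1), P k n m * P k n' m = if n = n' then 1 else 0) :
    blk2 N P * (blk2 N P).transpose = 1 := by
  ext p p'
  have hp := mem_tri.1 p.2
  have hp' := mem_tri.1 p'.2
  rw [Matrix.mul_apply, Matrix.one_apply]
  have e : ∀ q : tri N, blk2 N P p q * (blk2 N P).transpose q p' =
      if p.1.1 = q.1.1 then (if p'.1.1 = q.1.1 then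
        P q.1.1 p.1.2 q.1.2 * P q.1.1 p'.1.2 q.1.2 else 0) else 0 := by
    intro q
    simp only [Matrix.transpose_apply, blk2]
    split_ifs <;> simp
  rw [Finset.sum_congr rfl (fun q _ => e q),
    sum_tri_fst N p.1.1 (by omega)
      (fun i j => if p'.1.1 = i then P i p.1.2 j * P i p'.1.2 j else 0)]
  by_cases h2 : p'.1.1 = p.1.1
  · simp only [h2, if_true]
    rw [h _ (by omega) _ _ (by omega) (by omega)]
    congr 1
    rw [Subtype.ext_iff, Prod.ext_iff]
    simp [h2]
  · simp only [h2, if_false, Finset.sum_const_zero]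
    rw [if_neg]
    intro hh; apply h2; rw [hh]

lemma blk_entry (N : ℕ) (P Q R : ℕ → ℕ → ℕ → ℝ) (p q : tri N) :
    (blk1 N P * blk2 N Q * (blk1 N R).transpose) p q =
      ∑ a ∈ Finset.range (min (N - p.1.2) (N - q.1.2) + 1),
        P p.1.2 p.1.1 a * Q a p.1.2 q.1.2 * R q.1.2 q.1.1 a := by
  have hp := mem_tri.1 p.2
  have hq := mem_tri.1 q.2
  have e1 : ∀ x : tri N, (blk1 N P * blk2 N Q) p x =
      if x.1.1 < N - p.1.2 + 1 then P p.1.2 p.1.1 x.1.1 * Q x.1.1 p.1.2 x.1.2 else 0 := by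
    intro x
    rw [Matrix.mul_apply]
    have e : ∀ y : tri N, blk1 N P p y * blk2 N Q y x =
        if p.1.2 = y.1.2 then
          (if y.1.1 = x.1.1 then P y.1.2 p.1.1 y.1.1 * Q x.1.1 y.1.2 x.1.2 else 0) else 0 := by
      intro y
      simp only [blk1, blk2]
      split_ifs <;> simp
    rw [Finset.sum_congr rfl (fun y _ => e y),
      sum_tri_snd N p.1.2 (by omega)
        (fun i j => if i = x.1.1 then P j p.1.1 i * Q x.1.1 j x.1.2 else 0),
      Finset.sum_ite_eq']
    simp only [Finset.mem_range]
  rw [Matrix.mul_apply]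
  have e : ∀ x : tri N, (blk1 N P * blk2 N Q) p x * (blk1 N R).transpose x q =
      if q.1.2 = x.1.2 then (if x.1.1 < N - p.1.2 + 1 then
        P p.1.2 p.1.1 x.1.1 * Q x.1.1 p.1.2 x.1.2 * R x.1.2 q.1.1 x.1.1 else 0) else 0 := by
    intro x
    rw [e1]
    simp only [Matrix.transpose_apply, blk1]
    split_ifs <;> simp
  rw [Finset.sum_congr rfl (fun x _ => e x),
    sum_tri_snd N q.1.2 (by omega) (fun i j => if i < N - p.1.2 + 1 then
        P p.1.2 p.1.1 i * Q i p.1.2 j * R j q.1.1 i else 0), ← Finset.sum_filter]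
  apply Finset.sum_congr _ (fun _ _ => rfl)
  ext a
  simp only [Finset.mem_filter, Finset.mem_range]
  omega

/-- Unitarity of the Griffiths–Racah functions. -/
theorem stmt19 (j0 j1 j2 j3 j4 : ℝ) (N : ℕ)
    (h12 : j1 ≥ j2) (h24 : j2 ≥ j4) (h04 : j0 ≥ j4)
    (h0 : j0 ≥ 0) (h1 : j1 ≥ 0) (h2 : j2 ≥ 0) (h3 : j3 ≥ 0) (h4 : j4 ≥ 0)
    (hup : j1 + j2 + j0 + j4 ≥ j3) (hlow : j3 ≥ j1 + j2 + j0 - j4)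
    (hN : 0 < N) (hNdef : (N : ℝ) = j1 + j2 - j3 + j4 + j0)
    (hpos1 : ∀ n2 : ℕ, n2 ≤ N →
      PosCond (N - n2) (-2*j2 - 1) (-2*j1 - 1) ((N : ℝ) - n2 - 2*j2 + 2*j3 + 1))
    (hpos2 : ∀ a : ℕ, a ≤ N →
      PosCond (N - a) (-2*j0 - 1) (-2*j4 - 1) ((N : ℝ) - a - 2*j0 - 2*j1 - 1))
    (hpos3 : ∀ m2 : ℕ, m2 ≤ N →
      PosCond (N - m2) (-2*j2 - 1) (-2*j4 - 1) ((N : ℝ) - m2 - 2*j2 + 2*j3 + 1)) :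
    (∀ n1 n2 n1' n2' : ℕ, n1 + n2 ≤ N → n1' + n2' ≤ N →
      (∑ m1 ∈ Finset.range (N + 1), ∑ m2 ∈ Finset.range (N + 1 - m1),
        Griffiths j0 j1 j2 j3 j4 N n1 n2 m1 m2 * Griffiths j0 j1 j2 j3 j4 N n1' n2' m1 m2)
        = if n1 = n1' ∧ n2 = n2' then 1 else 0) ∧
    (∀ m1 m2 m1' m2' : ℕ, m1 + m2 ≤ N → m1' + m2' ≤ N →
      (∑ n1 ∈ Finset.range (N + 1), ∑ n2 ∈ Finset.range (N + 1 - n1),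
        Griffiths j0 j1 j2 j3 j4 N n1 n2 m1 m2 * Griffiths j0 j1 j2 j3 j4 N n1 n2 m1' m2')
        = if m1 = m1' ∧ m2 = m2' then 1 else 0) := by
  set P : ℕ → ℕ → ℕ → ℝ := fun k n a =>
    Pfun (N - k) (-2*j2 - 1) (-2*j1 - 1) ((N : ℝ) - k - 2*j2 + 2*j3 + 1) n a with hP
  set Q : ℕ → ℕ → ℕ → ℝ := fun k n m => (-1 : ℝ) ^ (k + m) *
    Pfun (N - k) (-2*j0 - 1) (-2*j4 - 1) ((N : ℝ) - k - 2*j0 - 2*j1 - 1) n m with hQ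
  set R : ℕ → ℕ → ℕ → ℝ := fun k n a =>
    Pfun (N - k) (-2*j2 - 1) (-2*j4 - 1) ((N : ℝ) - k - 2*j2 + 2*j3 + 1) n a with hR
  have oP : blk1 N P * (blk1 N P).transpose = 1 := blk1_orth N P
    (fun k hk n n' hn hn' => Pfun_orth _ _ _ _ (hpos1 k hk) n n' hn hn')
  have oR : blk1 N R * (blk1 N R).transpose = 1 := blk1_orth N R
    (fun k hk n n' hn hn' => Pfun_orth _ _ _ _ (hpos3 k hk) n n' hn hn')
  have oQ : blk2 N Q * (blk2 N Q).transpose = 1 := by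
    apply blk2_orth
    intro k hk n n' hn hn'
    rw [← Pfun_orth _ _ _ _ (hpos2 k hk) n n' hn hn']
    apply Finset.sum_congr rfl
    intro m _
    have s : (-1 : ℝ) ^ (k + m) * (-1 : ℝ) ^ (k + m) = 1 := by
      rw [← mul_pow]; norm_num
    simp only [hQ]
    linear_combination (Pfun (N - k) (-2*j0 - 1) (-2*j4 - 1) ((N : ℝ) - k - 2*j0 - 2*j1 - 1) n m *
      Pfun (N - k) (-2*j0 - 1) (-2*j4 - 1) ((N : ℝ) - k - 2*j0 - 2*j1 - 1) n' m) * s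
  set G := blk1 N P * blk2 N Q * (blk1 N R).transpose with hG
  have hGe : ∀ p q : tri N, G p q = Griffiths j0 j1 j2 j3 j4 N p.1.1 p.1.2 q.1.1 q.1.2 := by
    intro p q
    rw [hG, blk_entry]
    unfold Griffiths
    apply Finset.sum_congr rfl
    intro a _
    simp only [hP, hQ, hR]
    ring
  have oR' : (blk1 N R).transpose * blk1 N R = 1 := mul_eq_one_comm.1 oR
  have h1 : G * G.transpose = 1 := by
    rw [hG, Matrix.transpose_mul, Matrix.transpose_mul, Matrix.transpose_transpose]
    calc _ = blk1 N P * (blk2 N Q * (((blk1 N R).transpose * blk1 N R) * (blk2 N Q).transpose))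
          * (blk1 N P).transpose := by simp only [Matrix.mul_assoc]
      _ = 1 := by rw [oR', Matrix.one_mul, oQ, Matrix.mul_one, oP]
  have h2 : G.transpose * G = 1 := mul_eq_one_comm.1 h1
  constructor
  · intro n1 n2 n1' n2' hn hn'
    have e := congrFun (congrFun h1 ⟨(n1, n2), mem_tri.2 hn⟩) ⟨(n1', n2'), mem_tri.2 hn'⟩
    rw [Matrix.mul_apply, Matrix.one_apply] at e
    simp only [Matrix.transpose_apply, hGe] at e
    rw [sum_tri N (fun m1 m2 => Griffiths j0 j1 j2 j3 j4 N n1 n2 m1 m2 *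
      Griffiths j0 j1 j2 j3 j4 N n1' n2' m1 m2)] at e
    rw [e]
    simp only [Subtype.mk.injEq, Prod.mk.injEq]
  · intro m1 m2 m1' m2' hm hm'
    have e := congrFun (congrFun h2 ⟨(m1, m2), mem_tri.2 hm⟩) ⟨(m1', m2'), mem_tri.2 hm'⟩
    rw [Matrix.mul_apply, Matrix.one_apply] at e
    simp only [Matrix.transpose_apply, hGe] at e
    rw [sum_tri N (fun n1 n2 => Griffiths j0 j1 j2 j3 j4 N n1 n2 m1 m2 *
      Griffiths j0 j1 j2 j3 j4 N n1 n2 m1' m2')] at e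
    rw [e]
    simp only [Subtype.mk.injEq, Prod.mk.injEq]
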